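/- arXiv:2605.09130 — 2 statements merged into one kernel-verified Lean document; each statement's English description precedes it below -/
import Mathlib

section
/- Let A = F2[a0, a1, aβ, u0, u1, uβ], let q = a0·u1·uβ + a1·u0·uβ + aβ·u0·u1, and let T' be the localization of A/(q) at the multiplicative set generated by the images of a0, a1, aβ. Then there is an isomorphism of F2-algebras from T' to the Laurent polynomial ring R[a0^{±1}, a1^{±1}, aβ^{±1}] over R = F2[x,y,z]/(xy + xz + yz), which sends (the images of) a0, a1, aβ to the Laurent variables a0, a1, aβ and sends u0 ↦ x·a0, u1 ↦ y·a1, uβ ↦ z·aβ. -/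
/-!
STATEMENT 2: Let `A = F2[a0, a1, aβ, u0, u1, uβ]`, `q = a0·u1·uβ + a1·u0·uβ + aβ·u0·u1`,
and let `T'` be the localization of `A/(q)` at the multiplicative set generated by the
images of `a0, a1, aβ`.  Then `T'` is isomorphic as an `F2`-algebra to the Laurent
polynomial ring `R[a0^{±1}, a1^{±1}, aβ^{±1}]` over `R = F2[x,y,z]/(xy + xz + yz)`,
via an isomorphism sending `a0, a1, aβ` to the Laurent variables and
`u0 ↦ x·a0`, `u1 ↦ y·a1`, `uβ ↦ z·aβ`.
-/

noncomputable section

open MvPolynomial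

/-- The field with two elements. -/
abbrev F2 : Type := ZMod 2

/-- The polynomial ring `F2[x,y,z]`, with `x = X 0`, `y = X 1`, `z = X 2`. -/
abbrev P3 : Type := MvPolynomial (Fin 3) F2

/-- The relation `xy + xz + yz`. -/
def relP : P3 := X 0 * X 1 + X 0 * X 2 + X 1 * X 2

/-- The ring `R = F2[x,y,z]/(xy + xz + yz)`. -/
abbrev Rring : Type := P3 ⧸ Ideal.span {relP}

/-- The quotient map `F2[x,y,z] → R`. -/
def pr : P3 →ₐ[F2] Rring := Ideal.Quotient.mkₐ F2 (Ideal.span {relP})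

/-- The polynomial ring `A = F2[a0, a1, aβ, u0, u1, uβ]` with
`a0 = X 0`, `a1 = X 1`, `aβ = X 2`, `u0 = X 3`, `u1 = X 4`, `uβ = X 5`. -/
abbrev A6 : Type := MvPolynomial (Fin 6) F2

/-- The Euler-class relation `q = a0·u1·uβ + a1·u0·uβ + aβ·u0·u1`. -/
def qrel : A6 := X 0 * X 4 * X 5 + X 1 * X 3 * X 5 + X 2 * X 3 * X 4

/-- The quotient `A/(q)`. -/
abbrev Aq : Type := A6 ⧸ Ideal.span {qrel}

/-- The quotient map `A → A/(q)`. -/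
def aq : A6 →+* Aq := Ideal.Quotient.mk (Ideal.span {qrel})

/-- The multiplicative set generated by the images of `a0, a1, aβ` in `A/(q)`. -/
def Sa : Submonoid Aq := Submonoid.closure {aq (X 0), aq (X 1), aq (X 2)}

/-- `T'`, the localization of `A/(q)` at `a0, a1, aβ`. -/
abbrev T' : Type := Localization Sa

instance : Algebra F2 T' :=
  RingHom.toAlgebra (S := T') ((algebraMap Aq T').comp (algebraMap F2 Aq))

/-- The Laurent polynomial ring `R[a0^{±1}, a1^{±1}, aβ^{±1}]`, modelled as the group
algebra of `ℤ^3` over `R`. -/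
abbrev Laur : Type := AddMonoidAlgebra Rring (Fin 3 →₀ ℤ)

/-- The `i`-th Laurent variable in `R[a0^{±1}, a1^{±1}, aβ^{±1}]`. -/
def lv (i : Fin 3) : Laur := AddMonoidAlgebra.single (Finsupp.single i 1) 1

/-- Laurent variables to an integer power, as units. -/
def lvU (i : Fin 3) : Laurˣ where
  val := lv i
  inv := AddMonoidAlgebra.single (Finsupp.single i (-1)) 1
  val_inv := by
    rw [lv, AddMonoidAlgebra.single_mul_single, ← Finsupp.single_add]
    simp [AddMonoidAlgebra.one_def]
  inv_val := by
    rw [lv, AddMonoidAlgebra.single_mul_single, ← Finsupp.single_add]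
    simp [AddMonoidAlgebra.one_def]

lemma lvU_zpow (i : Fin 3) (k : ℤ) :
    ((lvU i ^ k : Laurˣ) : Laur) = AddMonoidAlgebra.single (Finsupp.single i k) 1 := by
  induction k with
  | zero => simp [AddMonoidAlgebra.one_def]
  | succ n ih =>
    rw [zpow_add_one, Units.val_mul, ih]
    change _ * lv i = _
    rw [lv, AddMonoidAlgebra.single_mul_single, ← Finsupp.single_add, mul_one]
  | pred n ih =>
    rw [zpow_sub_one, Units.val_mul, ih]
    change _ * AddMonoidAlgebra.single (Finsupp.single i (-1)) 1 = _
    rw [AddMonoidAlgebra.single_mul_single, ← Finsupp.single_add, mul_one, sub_eq_add_neg]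

lemma single_eq_prod (n : Fin 3 →₀ ℤ) :
    (AddMonoidAlgebra.single n 1 : Laur) =
      ((lvU 0 ^ n 0 * lvU 1 ^ n 1 * lvU 2 ^ n 2 : Laurˣ) : Laur) := by
  simp only [Units.val_mul, lvU_zpow, AddMonoidAlgebra.single_mul_single, mul_one]
  congr 1
  ext i
  fin_cases i <;> simp

/-- The map from the polynomial ring. -/
def phi0 : A6 →+* Laur :=
  eval₂Hom (algebraMap F2 Laur)
    ![lv 0, lv 1, lv 2, algebraMap Rring Laur (pr (X 0)) * lv 0,
      algebraMap Rring Laur (pr (X 1)) * lv 1, algebraMap Rring Laur (pr (X 2)) * lv 2]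

lemma pr_rel : pr (X 0) * pr (X 1) + pr (X 0) * pr (X 2) + pr (X 1) * pr (X 2) = 0 := by
  have : pr relP = 0 := by
    rw [pr, Ideal.Quotient.mkₐ_eq_mk, Ideal.Quotient.eq_zero_iff_mem]
    exact Ideal.mem_span_singleton_self _
  simpa [relP] using this

lemma aq_rel : aq (X 0) * aq (X 4) * aq (X 5) + aq (X 1) * aq (X 3) * aq (X 5)
    + aq (X 2) * aq (X 3) * aq (X 4) = 0 := by
  have : aq qrel = 0 := by
    rw [aq, Ideal.Quotient.eq_zero_iff_mem]
    exact Ideal.mem_span_singleton_self _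
  simpa [qrel] using this

lemma phi0_q : phi0 qrel = 0 := by
  have h := congrArg (algebraMap Rring Laur) pr_rel
  simp only [map_add, map_mul, map_zero] at h
  simp only [phi0, qrel, map_add, map_mul, coe_eval₂Hom, eval₂_X]
  simp only [Matrix.cons_val]
  linear_combination (lv 0 * lv 1 * lv 2) * h

/-- The map from the quotient. -/
def phi1 : Aq →+* Laur :=
  Ideal.Quotient.lift _ phi0 (by
    intro a ha
    obtain ⟨c, rfl⟩ := Ideal.mem_span_singleton'.1 ha
    rw [map_mul, phi0_q, mul_zero])

lemma phi1_aq (p : A6) : phi1 (aq p) = phi0 p := Ideal.Quotient.lift_mk _ _ _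

lemma phi1_unit (y : Sa) : IsUnit (phi1 y) := by
  obtain ⟨y, hy⟩ := y
  have : Sa ≤ (IsUnit.submonoid Laur).comap phi1 := by
    rw [Sa, Submonoid.closure_le]
    rintro _ (rfl | rfl | rfl)
    · exact ⟨lvU 0, by rw [phi1_aq]; simp [phi0, lvU]⟩
    · exact ⟨lvU 1, by rw [phi1_aq]; simp [phi0, lvU]⟩
    · exact ⟨lvU 2, by rw [phi1_aq]; simp [phi0, lvU]⟩
  exact this hy

/-- The forward map. -/
def phi : T' →+* Laur := IsLocalization.lift (R := Aq) (M := Sa) (S := T') (P := Laur) (g := phi1) phi1_unit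

lemma phi_aq (p : A6) : phi (algebraMap Aq T' (aq p)) = phi0 p := by
  rw [phi, IsLocalization.lift_eq, phi1_aq]

lemma mem0 : aq (X 0) ∈ Sa := Submonoid.subset_closure (by simp)
lemma mem1 : aq (X 1) ∈ Sa := Submonoid.subset_closure (by simp)
lemma mem2 : aq (X 2) ∈ Sa := Submonoid.subset_closure (by simp)

/-- The units of the localization. -/
def tU0 : T'ˣ := (IsLocalization.map_units T' (⟨_, mem0⟩ : Sa)).unit
/-- The units of the localization. -/
def tU1 : T'ˣ := (IsLocalization.map_units T' (⟨_, mem1⟩ : Sa)).unit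
/-- The units of the localization. -/
def tU2 : T'ˣ := (IsLocalization.map_units T' (⟨_, mem2⟩ : Sa)).unit

lemma tU0_val : (tU0 : T') = algebraMap Aq T' (aq (X 0)) := rfl
lemma tU1_val : (tU1 : T') = algebraMap Aq T' (aq (X 1)) := rfl
lemma tU2_val : (tU2 : T') = algebraMap Aq T' (aq (X 2)) := rfl

/-- The backward map on polynomials. -/
def psi0 : P3 →+* T' :=
  eval₂Hom ((algebraMap Aq T').comp (algebraMap F2 Aq))
    ![algebraMap Aq T' (aq (X 3)) * (tU0⁻¹ : T'ˣ), algebraMap Aq T' (aq (X 4)) * (tU1⁻¹ : T'ˣ),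
      algebraMap Aq T' (aq (X 5)) * (tU2⁻¹ : T'ˣ)]

lemma psi0_rel : psi0 relP = 0 := by
  have h := congrArg (algebraMap Aq T') aq_rel
  simp only [map_add, map_mul, map_zero, ← tU0_val, ← tU1_val, ← tU2_val] at h
  simp only [psi0, relP, map_add, map_mul, coe_eval₂Hom, eval₂_X]
  simp only [Matrix.cons_val]
  have h0 := tU0.mul_inv
  have h1 := tU1.mul_inv
  have h2 := tU2.mul_inv
  generalize algebraMap Aq T' (aq (X 3)) = x at *
  generalize algebraMap Aq T' (aq (X 4)) = y at *
  generalize algebraMap Aq T' (aq (X 5)) = z at *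
  generalize ((tU0⁻¹ : T'ˣ) : T') = i0 at *
  generalize ((tU1⁻¹ : T'ˣ) : T') = i1 at *
  generalize ((tU2⁻¹ : T'ˣ) : T') = i2 at *
  generalize (tU0 : T') = a0 at *
  generalize (tU1 : T') = a1 at *
  generalize (tU2 : T') = a2 at *
  linear_combination (i0 * i1 * i2) * h - y * z * i1 * i2 * h0 - x * z * i0 * i2 * h1
    - x * y * i0 * i1 * h2

/-- The backward map on `R`. -/
def psi1 : Rring →+* T' :=
  Ideal.Quotient.lift _ psi0 (by
    intro a ha
    obtain ⟨c, rfl⟩ := Ideal.mem_span_singleton'.1 ha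
    rw [map_mul, psi0_rel, mul_zero])

lemma psi1_pr (p : P3) : psi1 (pr p) = psi0 p := Ideal.Quotient.lift_mk _ _ _

lemma grp_aux {G : Type*} [Group G] (hc : ∀ x y : G, x * y = y * x) (a b c d e f : G) :
    a * b * (c * d) * (e * f) = a * c * e * (b * d * f) := by
  letI : CommGroup G := { (inferInstance : Group G) with mul_comm := hc }
  rw [mul_mul_mul_comm a, mul_mul_mul_comm (a * c)]

/-- The backward map on monomials. -/
def psiM : Multiplicative (Fin 3 →₀ ℤ) →* T' where
  toFun n := ((tU0 ^ n.toAdd 0 * tU1 ^ n.toAdd 1 * tU2 ^ n.toAdd 2 : T'ˣ) : T')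
  map_one' := by simp
  map_mul' m n := by
    rw [← Units.val_mul]
    congr 1
    simp only [toAdd_mul, Finsupp.add_apply, zpow_add]
    exact grp_aux (fun x y => Units.ext (mul_comm (x : T') (y : T'))) _ _ _ _ _ _

/-- The backward map. -/
def psi : Laur →+* T' := AddMonoidAlgebra.liftNCRingHom psi1 psiM (fun x y => mul_comm (psi1 x) (psiM y))

lemma psi_single (n : Fin 3 →₀ ℤ) (r : Rring) :
    psi (AddMonoidAlgebra.single n r) = psi1 r * psiM (Multiplicative.ofAdd n) :=
  AddMonoidAlgebra.liftNC_single (psi1 : Rring →+ T') (psiM : Multiplicative (Fin 3 →₀ ℤ) → T') n r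

lemma psi_alg (r : Rring) : psi (algebraMap Rring Laur r) = psi1 r := by
  change psi (AddMonoidAlgebra.single 0 r) = _
  rw [psi_single, ofAdd_zero, map_one, mul_one]

lemma psi_lv0 : psi (lv 0) = (tU0 : T') := by
  rw [lv, psi_single]; simp [psiM]
lemma psi_lv1 : psi (lv 1) = (tU1 : T') := by
  rw [lv, psi_single]; simp [psiM]
lemma psi_lv2 : psi (lv 2) = (tU2 : T') := by
  rw [lv, psi_single]; simp [psiM]

lemma psi_phi0 (i : Fin 6) : psi (phi0 (X i)) = algebraMap Aq T' (aq (X i)) := by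
  have hX : phi0 (X i) = ![lv 0, lv 1, lv 2, algebraMap Rring Laur (pr (X 0)) * lv 0,
      algebraMap Rring Laur (pr (X 1)) * lv 1, algebraMap Rring Laur (pr (X 2)) * lv 2] i :=
    eval₂_X _ _ _
  rw [hX]
  fin_cases i
  · exact psi_lv0
  · exact psi_lv1
  · exact psi_lv2
  · change psi (algebraMap Rring Laur (pr (X 0)) * lv 0) = _
    rw [map_mul, psi_alg, psi1_pr, psi_lv0, psi0, coe_eval₂Hom, eval₂_X]
    exact Units.inv_mul_cancel_right _ tU0
  · change psi (algebraMap Rring Laur (pr (X 1)) * lv 1) = _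
    rw [map_mul, psi_alg, psi1_pr, psi_lv1, psi0, coe_eval₂Hom, eval₂_X]
    exact Units.inv_mul_cancel_right _ tU1
  · change psi (algebraMap Rring Laur (pr (X 2)) * lv 2) = _
    rw [map_mul, psi_alg, psi1_pr, psi_lv2, psi0, coe_eval₂Hom, eval₂_X]
    exact Units.inv_mul_cancel_right _ tU2

lemma psi_phi : psi.comp phi = RingHom.id T' := by
  refine IsLocalization.ringHom_ext (R := Aq) (S := T') Sa ?_
  refine Ideal.Quotient.ringHom_ext ?_
  refine MvPolynomial.ringHom_ext' (Subsingleton.elim _ _) fun i => ?_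
  change psi (phi (algebraMap Aq T' (aq (X i)))) = algebraMap Aq T' (aq (X i))
  rw [phi_aq, psi_phi0]

lemma phi_tU0 : Units.map (phi : T' →* Laur) tU0 = lvU 0 := by
  ext1; change phi (algebraMap Aq T' (aq (X 0))) = lv 0; rw [phi_aq]; simp [phi0]
lemma phi_tU1 : Units.map (phi : T' →* Laur) tU1 = lvU 1 := by
  ext1; change phi (algebraMap Aq T' (aq (X 1))) = lv 1; rw [phi_aq]; simp [phi0]
lemma phi_tU2 : Units.map (phi : T' →* Laur) tU2 = lvU 2 := by
  ext1; change phi (algebraMap Aq T' (aq (X 2))) = lv 2; rw [phi_aq]; simp [phi0]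

lemma phi_unit_coe (u : T'ˣ) : phi (u : T') = (Units.map (phi : T' →* Laur) u : Laurˣ) := rfl

lemma phi_psi0 (i : Fin 3) : phi (psi0 (X i)) = algebraMap Rring Laur (pr (X i)) := by
  have key : ∀ j : Fin 3, lv j * ((lvU j)⁻¹ : Laurˣ) = 1 := fun j => (lvU j).mul_inv
  fin_cases i
  · simp [psi0, phi_aq, phi_unit_coe, -Units.coe_map, -Units.coe_map_inv, map_inv, phi_tU0, phi0,
      mul_assoc, key]
  · simp [psi0, phi_aq, phi_unit_coe, -Units.coe_map, -Units.coe_map_inv, map_inv, phi_tU1, phi0,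
      mul_assoc, key]
  · simp [psi0, phi_aq, phi_unit_coe, -Units.coe_map, -Units.coe_map_inv, map_inv, phi_tU2, phi0,
      mul_assoc, key]

lemma phi_psi1 : phi.comp psi1 = algebraMap Rring Laur := by
  refine Ideal.Quotient.ringHom_ext ?_
  refine MvPolynomial.ringHom_ext' (Subsingleton.elim _ _) fun i => ?_
  exact phi_psi0 i

lemma phi_psiM (n : Fin 3 →₀ ℤ) :
    phi (psiM (Multiplicative.ofAdd n)) = AddMonoidAlgebra.single n 1 := by
  rw [single_eq_prod, ← phi_tU0, ← phi_tU1, ← phi_tU2, ← map_zpow, ← map_zpow, ← map_zpow,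
    ← map_mul, ← map_mul]
  rfl

lemma phi_psi : phi.comp psi = RingHom.id Laur := by
  refine AddMonoidAlgebra.ringHom_ext (fun r => ?_) (fun n => ?_)
  · change phi (psi (algebraMap Rring Laur r)) = algebraMap Rring Laur r
    rw [psi_alg]
    exact DFunLike.congr_fun phi_psi1 r
  · change phi (psi (AddMonoidAlgebra.single n 1)) = AddMonoidAlgebra.single n 1
    rw [psi_single, map_one, one_mul, phi_psiM]

/-- There is an `F2`-algebra isomorphism
`T' ≅ R[a0^{±1}, a1^{±1}, aβ^{±1}]` sending `a0, a1, aβ` to the Laurent variables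
and `u0 ↦ x·a0`, `u1 ↦ y·a1`, `uβ ↦ z·aβ`. -/
theorem localization_iso_laurent :
    ∃ e : T' ≃ₐ[F2] Laur,
      e (algebraMap Aq T' (aq (X 0))) = lv 0 ∧
      e (algebraMap Aq T' (aq (X 1))) = lv 1 ∧
      e (algebraMap Aq T' (aq (X 2))) = lv 2 ∧
      e (algebraMap Aq T' (aq (X 3))) = algebraMap Rring Laur (pr (X 0)) * lv 0 ∧
      e (algebraMap Aq T' (aq (X 4))) = algebraMap Rring Laur (pr (X 1)) * lv 1 ∧
      e (algebraMap Aq T' (aq (X 5))) = algebraMap Rring Laur (pr (X 2)) * lv 2 := by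
  refine ⟨AlgEquiv.ofRingEquiv (f := RingEquiv.ofRingHom phi psi phi_psi psi_phi) fun r =>
    DFunLike.congr_fun (Subsingleton.elim (phi.comp (algebraMap F2 T')) (algebraMap F2 Laur)) r,
    ?_, ?_, ?_, ?_, ?_, ?_⟩
  all_goals
    refine (phi_aq _).trans ?_
    simp [phi0]

end
end

section
/- Let A = F2[a0, a1, aβ, u0, u1, uβ], let q = a0·u1·uβ + a1·u0·uβ + aβ·u0·u1, and let T be the localization of A/(q) at the multiplicative set generated by the images of u0, u1, uβ. Set t0 = a0·u0^{-1} and t1 = aβ·uβ^{-1} in T. Then (u0·u1·uβ)·(t0^2 + t0·t1 + t1^2) = a0·a1·uβ + a1·aβ·u0 + a0·aβ·u1 in T. -/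
noncomputable section

open MvPolynomial

/-- The multiplicative set generated by the images of `u0, u1, uβ` in `A/(q)`. -/
def Su : Submonoid Aq := Submonoid.closure {aq (X 3), aq (X 4), aq (X 5)}

/-- `T`, the localization of `A/(q)` at `u0, u1, uβ`. -/
abbrev T : Type := Localization Su

/-- `u0` as an element of the multiplicative set. -/
def u0S : Su := ⟨aq (X 3), Submonoid.subset_closure (by simp)⟩

/-- `u1` as an element of the multiplicative set. -/
def u1S : Su := ⟨aq (X 4), Submonoid.subset_closure (by simp)⟩

/-- `uβ` as an element of the multiplicative set. -/
def uβS : Su := ⟨aq (X 5), Submonoid.subset_closure (by simp)⟩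

/-- `t0 = a0·u0⁻¹` in `T`. -/
def t0 : T := Localization.mk (aq (X 0)) u0S

/-- `t1 = aβ·uβ⁻¹` in `T`. -/
def t1 : T := Localization.mk (aq (X 2)) uβS

theorem dickson_aux {R : Type*} [CommRing R] (a0 a1 ab u0 u1 ub s t : R) (h2 : (2 : R) = 0)
    (hu0 : IsUnit u0) (hub : IsUnit ub) (h0 : s * u0 = a0) (h1 : t * ub = ab)
    (hq : a0 * u1 * ub + a1 * u0 * ub + ab * u0 * u1 = 0) :
    u0 * u1 * ub * (s ^ 2 + s * t + t ^ 2) = a0 * a1 * ub + a1 * ab * u0 + a0 * ab * u1 := by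
  subst h0 h1
  have h : a1 + u1 * (s + t) = 0 := by
    apply (hu0.mul hub).mul_left_cancel
    linear_combination hq
  linear_combination (-(u0 * ub * (s + t))) * h + (u0 * u1 * ub * (s ^ 2 + s * t + t ^ 2)) * h2

set_option synthInstance.maxHeartbeats 1000000 in
/-- In `T`, `(u0·u1·uβ)·(t0² + t0·t1 + t1²) = a0·a1·uβ + a1·aβ·u0 + a0·aβ·u1`.
(The element `t0² + t0·t1 + t1²` is the image of the degree-2 Dickson invariant
`p1 = t² + t·t' + t'²` under `t ↦ t0`, `t' ↦ t1`.) -/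
theorem dickson_p1_identity :
    algebraMap Aq T (aq (X 3 * X 4 * X 5)) * (t0 ^ 2 + t0 * t1 + t1 ^ 2) =
      algebraMap Aq T (aq (X 0 * X 1 * X 5 + X 1 * X 2 * X 3 + X 0 * X 2 * X 4)) := by
  have h2 : (2 : T) = 0 := by
    have h : (2 : A6) = 0 := CharTwo.two_eq_zero
    have h' := congrArg (fun x => algebraMap Aq T (aq x)) h
    simpa only [map_ofNat, map_zero] using h'
  have hq : algebraMap Aq T (aq qrel) = 0 := by
    have h : aq qrel = 0 :=
      Ideal.Quotient.eq_zero_iff_mem.mpr (Ideal.subset_span (Set.mem_singleton _))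
    rw [h, map_zero]
  have h0 : t0 * algebraMap Aq T (aq (X 3)) = algebraMap Aq T (aq (X 0)) := by
    have h := IsLocalization.mk'_spec T (aq (X 0)) u0S
    rw [← Localization.mk_eq_mk'] at h
    exact h
  have h1 : t1 * algebraMap Aq T (aq (X 5)) = algebraMap Aq T (aq (X 2)) := by
    have h := IsLocalization.mk'_spec T (aq (X 2)) uβS
    rw [← Localization.mk_eq_mk'] at h
    exact h
  have hu0 : IsUnit (algebraMap Aq T (aq (X 3))) := IsLocalization.map_units T u0S
  have hub : IsUnit (algebraMap Aq T (aq (X 5))) := IsLocalization.map_units T uβS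
  simp only [qrel, map_add, map_mul] at hq ⊢
  exact dickson_aux (R := T) (algebraMap Aq T (aq (X 0))) (algebraMap Aq T (aq (X 1)))
    (algebraMap Aq T (aq (X 2))) (algebraMap Aq T (aq (X 3))) (algebraMap Aq T (aq (X 4)))
    (algebraMap Aq T (aq (X 5))) t0 t1 h2 hu0 hub h0 h1 hq

end
end
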